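/- arXiv:2208.00917 — 2 statements merged into one kernel-verified Lean document; each statement's English description precedes it below -/
import Mathlib

section
/- Suppose that J is ferromagnetic and let t ≥ 0. If n is even, then there exist real numbers 0 < x_1 ≤ x_2 ≤ … ≤ x_{n/2} ≤ π/2 such that for every x ∈ ℂ, Z_{G,t}(x) = Z_{G,t}(0) · ∏_{j=1}^{n/2} (sin²x_j − sin²x)/sin²x_j. If n is odd, then there exist real numbers 0 < x_1 ≤ x_2 ≤ … ≤ x_{(n−1)/2} ≤ π/2 such that for every x ∈ ℂ, Z_{G,t}(x) = Z_{G,t}(0) · cos(x) · ∏_{j=1}^{(n−1)/2} (sin²x_j − sin²x)/sin²x_j. -/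
open scoped Real

noncomputable def spin (b : Bool) : ℝ := if b then 1 else -1

noncomputable def pairProd {V : Type} (σ : V → Bool) (e : Sym2 V) : ℝ :=
  Sym2.lift ⟨fun u v => spin (σ u) * spin (σ v), fun _ _ => mul_comm _ _⟩ e

/-- The Ising partition function `Z_{G,t}(x)` with an extra coupling `t` at the edge
`u₀v₀`, couplings `J` on the edge set `E`, and (complex) external field `i·x`. -/
noncomputable def IsingZ {V : Type} [Fintype V] [DecidableEq V]
    (E : Finset (Sym2 V)) (J : Sym2 V → ℝ) (u₀ v₀ : V) (t x : ℂ) : ℂ :=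
  ∑ σ : V → Bool, Complex.exp
    (t * ((spin (σ u₀) * spin (σ v₀) : ℝ) : ℂ)
      + ((∑ e ∈ E, J e * pairProd σ e : ℝ) : ℂ)
      + Complex.I * x * ((∑ u, spin (σ u) : ℝ) : ℂ))

/-!
By Asano's contraction argument the polynomial `∑_σ w(σ) ∏_{σ u = +1} z_u` of a ferromagnetic
Boltzmann weight `w` has no zero in the open unit polydisc. Substituting `z_u = exp (2 i x)` and
using the symmetry `x ↦ -x` gives the Lee–Yang theorem: every zero `x` of `Z` is real.
Spin-flip symmetry also makes `Z` a combination of the functions `cos (m x)` with `m ≤ n` and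
`m ≡ n` mod `2`, that is, `cos x ^ (n % 2)` times a polynomial of degree exactly `n / 2` in
`sin² x`. By Lee–Yang the roots of this polynomial are of the form `sin² y` with
`0 < y ≤ π / 2`, and factoring it into linear factors gives the product formula.
-/

theorem exists_monotoneOn_map_Icc_eq {α : Type*} [LinearOrder α] [Inhabited α] (s : Multiset α) :
    ∃ x : ℕ → α, MonotoneOn x (Set.Icc 1 s.card) ∧ (Finset.Icc 1 s.card).val.map x = s := by
  have hlen : (s.sort (· ≤ ·)).length = s.card := s.length_sort (· ≤ ·)
  refine ⟨fun k => (s.sort (· ≤ ·)).getD (k - 1) default, fun i hi j hj hij => ?_, ?_⟩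
  · obtain ⟨hi1, hin⟩ := hi
    obtain ⟨_, hjn⟩ := hj
    beta_reduce
    rw [List.getD_eq_getElem _ _ (by lia), List.getD_eq_getElem _ _ (by lia)]
    exact (s.pairwise_sort (· ≤ ·)).sortedLE.getElem_le_getElem_of_le (by lia)
  · conv_rhs => rw [← s.sort_eq (· ≤ ·)]
    refine congrArg _ (List.ext_getElem (by simp) fun k _ hk => ?_)
    rw [List.getElem_map, List.getD_eq_getElem _ _ (by simpa using hk)]
    simp

section Polynomial

open Polynomial

theorem exists_natDegree_eq_cos_two_mul (k : ℕ) :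
    ∃ P : ℂ[X], P.natDegree = k ∧
      ∀ x, Complex.cos ((2 * k : ℕ) * x) = P.eval (Complex.sin x ^ 2) := by
  refine ⟨(Chebyshev.T ℂ k).comp (1 - 2 * X), ?_, fun x => ?_⟩
  · have hlin : (1 - 2 * X : ℂ[X]).natDegree = 1 := by compute_degree!
    rw [natDegree_comp, hlin, mul_one, Chebyshev.natDegree_T, Int.natAbs_natCast]
  · have hcos : 1 - 2 * Complex.sin x ^ 2 = Complex.cos (2 * x) := by
      rw [Complex.cos_two_mul, Complex.sin_sq]; ring
    simp only [eval_comp, eval_sub, eval_one, eval_mul, eval_ofNat, eval_X, hcos,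
      Chebyshev.T_complex_cos]
    push_cast
    ring_nf

theorem cos_two_mul_add_one_mul (k : ℕ) (x : ℂ) :
    Complex.cos ((2 * k + 1 : ℕ) * x) = Complex.cos x *
      (Chebyshev.U ℂ k - Chebyshev.U ℂ (k - 1)).eval (Complex.cos (2 * x)) := by
  have hTU : Chebyshev.U ℂ k - Chebyshev.U ℂ (k - 1)
      = Chebyshev.T ℂ k - (1 - X) * Chebyshev.U ℂ (k - 1) := by
    rw [Chebyshev.T_eq_U_sub_X_mul_U]; ring
  have hT := Chebyshev.T_complex_cos (2 * x) k
  have hU := Chebyshev.U_complex_cos (2 * x) (k - 1)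
  have hcos : Complex.cos (2 * x) = 1 - 2 * Complex.sin x ^ 2 := by
    rw [Complex.cos_two_mul, Complex.sin_sq]; ring
  have hangle : ((2 * k + 1 : ℕ) : ℂ) * x = k * (2 * x) + x := by push_cast; ring
  push_cast at hT hU
  rw [sub_add_cancel, Complex.sin_two_mul] at hU
  rw [hTU, hangle, Complex.cos_add, eval_sub, eval_mul, eval_sub, eval_one, eval_X, hT, ← hU]
  linear_combination
    Complex.cos x * (Chebyshev.U ℂ (k - 1)).eval (Complex.cos (2 * x)) * -hcos

theorem exists_natDegree_eq_cos_two_mul_add_one (k : ℕ) :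
    ∃ P : ℂ[X], P.natDegree = k ∧
      ∀ x, Complex.cos ((2 * k + 1 : ℕ) * x) = Complex.cos x * P.eval (Complex.sin x ^ 2) := by
  refine ⟨(Chebyshev.U ℂ k - Chebyshev.U ℂ (k - 1)).comp (1 - 2 * X), ?_, fun x => ?_⟩
  · have hlin : (1 - 2 * X : ℂ[X]).natDegree = 1 := by compute_degree!
    have hlt : (Chebyshev.U ℂ (k - 1)).degree < (Chebyshev.U ℂ k).degree := by
      rw [Chebyshev.degree_U_natCast]
      rcases k with _ | k
      · simp
      · rw [Nat.cast_succ, add_sub_cancel_right, Chebyshev.degree_U_natCast]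
        exact_mod_cast k.lt_succ_self
    rw [natDegree_comp, hlin, mul_one,
      natDegree_eq_of_degree_eq (degree_sub_eq_left_of_degree_lt hlt),
      Chebyshev.natDegree_U_natCast]
  · have hcos : Complex.cos (2 * x) = 1 - 2 * Complex.sin x ^ 2 := by
      rw [Complex.cos_two_mul, Complex.sin_sq]; ring
    simp only [cos_two_mul_add_one_mul, hcos, eval_comp, eval_sub, eval_one, eval_mul, eval_ofNat,
      eval_X]

theorem exists_natDegree_eq_cos_nat_mul (m : ℕ) :
    ∃ P : ℂ[X], P.natDegree = m / 2 ∧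
      ∀ x, Complex.cos (m * x) = Complex.cos x ^ (m % 2) * P.eval (Complex.sin x ^ 2) := by
  rcases Nat.even_or_odd' m with ⟨k, rfl | rfl⟩
  · obtain ⟨P, hdeg, hP⟩ := exists_natDegree_eq_cos_two_mul k
    exact ⟨P, by lia, fun x => by rw [hP, Nat.mul_mod_right, pow_zero, one_mul]⟩
  · obtain ⟨P, hdeg, hP⟩ := exists_natDegree_eq_cos_two_mul_add_one k
    exact ⟨P, by lia, fun x => by rw [hP, Nat.mul_add_mod, Nat.one_mod, pow_one]⟩

theorem eval_eq_eval_zero_mul_prod_roots {K : Type*} [Field K] {Q : K[X]} (hQ : Q.Splits)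
    (h0 : Q.eval 0 ≠ 0) (s : K) :
    Q.eval s = Q.eval 0 * (Q.roots.map fun r => (r - s) / r).prod := by
  rw [hQ.eval_eq_prod_roots s, hQ.eval_eq_prod_roots 0, mul_assoc, ← Multiset.prod_map_mul]
  congr 2
  refine Multiset.map_congr rfl fun r hr => ?_
  have hr0 : r ≠ 0 := by rintro rfl; exact h0 (isRoot_of_mem_roots hr)
  field_simp
  ring

end Polynomial

section Bilinear

theorem asano_contraction {a b c d : ℂ}
    (h : ∀ z w : ℂ, ‖z‖ < 1 → ‖w‖ < 1 → a + b * z + c * w + d * (z * w) ≠ 0)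
    {z : ℂ} (hz : ‖z‖ < 1) : a + d * z ≠ 0 := by
  intro hzero
  have ha : a ≠ 0 := by simpa using h 0 0 (by simp) (by simp)
  have hd : d ≠ 0 := by rintro rfl; simp_all
  have one_le_norm : ∀ r, d * (r * r) + (b + c) * r + a = 0 → 1 ≤ ‖r‖ := by
    intro r hr
    by_contra! hlt
    exact h r r hlt hlt (by linear_combination hr)
  -- The roots of the diagonal polynomial `a + (b + c) r + d r²` have product `a / d = -z`.
  obtain ⟨r, hr⟩ := exists_quadratic_eq_zero (b := b + c) (c := a) hd
    (IsAlgClosed.exists_eq_mul_self _)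
  have hr0 : r ≠ 0 := by rintro rfl; simp_all
  have hr' : d * (-z / r * (-z / r)) + (b + c) * (-z / r) + a = 0 := by
    field_simp
    linear_combination -z * hr + (r ^ 2 + z) * hzero
  have hprod : ‖r‖ * ‖-z / r‖ = ‖z‖ := by
    rw [← norm_mul, mul_div_cancel₀ _ hr0, norm_neg]
  have := one_le_mul_of_one_le_of_one_le (one_le_norm r hr) (one_le_norm _ hr')
  linarith

theorem norm_ofReal_add_le_norm_one_add_mul {l : ℝ} (hl : |l| ≤ 1) {z : ℂ} (hz : ‖z‖ ≤ 1) :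
    ‖l + z‖ ≤ ‖1 + l * z‖ := by
  have hsq : ‖1 + l * z‖ ^ 2 - ‖l + z‖ ^ 2 = (1 - l ^ 2) * (1 - ‖z‖ ^ 2) := by
    simp only [Complex.sq_norm, Complex.normSq_apply, Complex.add_re, Complex.add_im,
      Complex.one_re, Complex.one_im, Complex.re_ofReal_mul, Complex.im_ofReal_mul,
      Complex.ofReal_re, Complex.ofReal_im]
    ring
  have hl' : 0 ≤ 1 - l ^ 2 := sub_nonneg.2 ((sq_le_one_iff_abs_le_one l).2 hl)
  have hz' : 0 ≤ 1 - ‖z‖ ^ 2 := sub_nonneg.2 (pow_le_one₀ (norm_nonneg z) hz)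
  refine le_of_sq_le_sq ?_ (norm_nonneg _)
  linarith [mul_nonneg hl' hz']

theorem one_add_mul_add_mul_ne_zero {l : ℝ} (hl : |l| ≤ 1) {z w : ℂ}
    (hz : ‖z‖ < 1) (hw : ‖w‖ < 1) : 1 + l * z + (l + z) * w ≠ 0 := by
  have hlz : (1 : ℂ) + l * z ≠ 0 := by
    intro h
    have : ‖(l : ℂ) * z‖ = 1 := by rw [eq_neg_of_add_eq_zero_right h, norm_neg, norm_one]
    rw [norm_mul, Complex.norm_real, Real.norm_eq_abs] at this
    linarith [mul_le_of_le_one_left (norm_nonneg z) hl]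
  intro h
  have hnorm : ‖1 + l * z‖ = ‖l + z‖ * ‖w‖ := by
    rw [eq_neg_of_add_eq_zero_left h, norm_neg, norm_mul]
  have hle := norm_ofReal_add_le_norm_one_add_mul hl hz.le
  nlinarith [norm_pos_iff.2 hlz, norm_nonneg w]

theorem bilinear_damp_ne_zero {a b c d : ℂ} {l : ℝ} (hl : |l| ≤ 1)
    (h : ∀ z w : ℂ, ‖z‖ < 1 → ‖w‖ < 1 → a + b * z + c * w + d * (z * w) ≠ 0)
    {z w : ℂ} (hz : ‖z‖ < 1) (hw : ‖w‖ < 1) :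
    a + l * b * z + l * c * w + d * (z * w) ≠ 0 := by
  -- Multiply by `1 + l z' + (l + z') w'`, then contract `z` with `z'` and `w` with `w'`.
  have contract_left : ∀ s s' : ℂ, ‖s‖ < 1 → ‖s'‖ < 1 →
      (a + c * s) * (1 + l * s') + (b + d * s) * (l + s') * z ≠ 0 := by
    intro s s' hs hs'
    refine asano_contraction (b := (b + d * s) * (1 + l * s'))
      (c := (a + c * s) * (l + s')) (fun r r' hr hr' => ?_) hz
    convert mul_ne_zero (h r s hr hs) (one_add_mul_add_mul_ne_zero hl hs' hr') using 1
    ring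
  convert asano_contraction (a := a + l * b * z) (b := c + l * d * z) (c := l * a + b * z)
    (d := l * c + d * z) (fun s s' hs hs' => ?_) hw using 1
  · ring
  · convert contract_left s s' hs hs' using 1
    ring

end Bilinear

section LeeYang

variable {V : Type*} [Fintype V] [DecidableEq V]

/-- The multi-affine generating polynomial `∑_σ f(σ) ∏_{σ u = true} z_u` of a weight `f` on spin
configurations, evaluated at `z`. -/
noncomputable def spinPoly (f : (V → Bool) → ℂ) (z : V → ℂ) : ℂ :=
  ∑ σ : V → Bool, f σ * ∏ u, if σ u then z u else 1

/-- The Lee–Yang property of a weight on spin configurations: its generating polynomial has no zero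
in the open unit polydisc. -/
def LeeYang (f : (V → Bool) → ℂ) : Prop :=
  ∀ z : V → ℂ, (∀ u, ‖z u‖ < 1) → spinPoly f z ≠ 0

/-- The coefficient in `spinPoly f z`, regarded as a polynomial in `z u` and `z v` alone, of the
monomial in which `z u` occurs iff `p` and `z v` occurs iff `q`. -/
noncomputable def pairCoeff (f : (V → Bool) → ℂ) (z : V → ℂ) (u v : V) (p q : Bool) : ℂ :=
  ∑ σ : V → Bool with σ u = p ∧ σ v = q, f σ * ∏ w ∈ {u, v}ᶜ, if σ w then z w else 1

theorem spinPoly_eq_pairCoeff (f : (V → Bool) → ℂ) (z : V → ℂ) {u v : V} (huv : u ≠ v) :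
    spinPoly f z = pairCoeff f z u v false false + pairCoeff f z u v true false * z u
      + pairCoeff f z u v false true * z v + pairCoeff f z u v true true * (z u * z v) := by
  simp only [spinPoly, pairCoeff, Finset.sum_filter, Finset.sum_mul, ← Finset.sum_add_distrib]
  refine Finset.sum_congr rfl fun σ _ => ?_
  rw [← Finset.prod_mul_prod_compl {u, v}, Finset.prod_pair huv]
  cases σ u <;> cases σ v <;> simp <;> ring

theorem pairCoeff_congr (f : (V → Bool) → ℂ) {z z' : V → ℂ} {u v : V}
    (h : ∀ w, w ≠ u → w ≠ v → z w = z' w) (p q : Bool) :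
    pairCoeff f z u v p q = pairCoeff f z' u v p q := by
  refine Finset.sum_congr rfl fun σ _ => congrArg (f σ * ·) (Finset.prod_congr rfl fun w hw => ?_)
  rw [Finset.mem_compl, Finset.mem_insert, Finset.mem_singleton, not_or] at hw
  rw [h w hw.1 hw.2]

theorem pairCoeff_mul (c : Bool → Bool → ℂ) (f : (V → Bool) → ℂ) (z : V → ℂ) (u v : V)
    (p q : Bool) :
    pairCoeff (fun σ => c (σ u) (σ v) * f σ) z u v p q = c p q * pairCoeff f z u v p q := by
  rw [pairCoeff, pairCoeff, Finset.mul_sum]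
  refine Finset.sum_congr rfl fun σ hσ => ?_
  obtain ⟨rfl, rfl⟩ := (Finset.mem_filter.1 hσ).2
  ring

theorem leeYang_one : LeeYang (fun _ : V → Bool => 1) := by
  intro z hz
  have hprod : spinPoly (fun _ : V → Bool => 1) z = ∏ u, (1 + z u) := by
    simp only [spinPoly, one_mul,
      ← Fintype.prod_sum fun (u : V) (b : Bool) => if b then z u else 1]
    simp [add_comm]
  rw [hprod, Finset.prod_ne_zero_iff]
  intro u _ h
  have := hz u
  rw [eq_neg_of_add_eq_zero_right h, norm_neg, norm_one] at this
  exact lt_irrefl _ this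

theorem LeeYang.const_mul {f : (V → Bool) → ℂ} (hf : LeeYang f) {c : ℂ} (hc : c ≠ 0) :
    LeeYang (fun σ => c * f σ) := by
  intro z hz
  simp only [spinPoly, mul_assoc, ← Finset.mul_sum]
  exact mul_ne_zero hc (hf z hz)

theorem LeeYang.mul_ite_eq {f : (V → Bool) → ℂ} (hf : LeeYang f) (u v : V) {l : ℝ}
    (hl : |l| ≤ 1) : LeeYang (fun σ => (if σ u = σ v then 1 else (l : ℂ)) * f σ) := by
  rcases eq_or_ne u v with rfl | huv
  · simpa using hf
  intro z hz
  rw [spinPoly_eq_pairCoeff _ _ huv]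
  simp only [pairCoeff_mul (fun p q => if p = q then 1 else (l : ℂ)), reduceIte, one_mul,
    Bool.true_eq_false, Bool.false_eq_true]
  refine bilinear_damp_ne_zero hl (fun s t hs ht => ?_) (hz u) (hz v)
  let z' := Function.update (Function.update z u s) v t
  have hu : z' u = s := by simp [z', huv]
  have hv : z' v = t := by simp [z']
  have hoff : ∀ w, w ≠ u → w ≠ v → z w = z' w := fun w hwu hwv => by simp [z', hwu, hwv]
  simp only [pairCoeff_congr f hoff]
  rw [← hu, ← hv, ← spinPoly_eq_pairCoeff f z' huv]
  refine hf z' fun w => ?_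
  rcases eq_or_ne w v with rfl | hwv
  · rwa [hv]
  rcases eq_or_ne w u with rfl | hwu
  · rwa [hu]
  rw [← hoff w hwu hwv]
  exact hz w

end LeeYang

section Field

variable {V : Type*} [Fintype V]

/-- The total spin of a configuration. -/
def totalSpin (σ : V → Bool) : ℤ := ∑ u, if σ u then 1 else -1

theorem totalSpin_compl (σ : V → Bool) : totalSpin σᶜ = -totalSpin σ := by
  rw [totalSpin, totalSpin, ← Finset.sum_neg_distrib]
  refine Finset.sum_congr rfl fun u _ => ?_
  cases h : σ u <;> simp [h]

theorem totalSpin_eq_two_mul_card_sub (σ : V → Bool) :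
    totalSpin σ = 2 * (Finset.univ.filter fun u => σ u).card - Fintype.card V := by
  have hspin (u : V) : (if σ u then (1 : ℤ) else -1) = 2 * (if σ u then 1 else 0) - 1 := by
    split_ifs <;> rfl
  simp only [totalSpin, hspin, Finset.sum_sub_distrib, ← Finset.mul_sum]
  simp

theorem natAbs_totalSpin_le (σ : V → Bool) : (totalSpin σ).natAbs ≤ Fintype.card V := by
  have := totalSpin_eq_two_mul_card_sub σ
  have := Finset.card_le_univ (Finset.univ.filter fun u => σ u)
  lia

theorem natAbs_totalSpin_mod_two (σ : V → Bool) :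
    (totalSpin σ).natAbs % 2 = Fintype.card V % 2 := by
  have := totalSpin_eq_two_mul_card_sub σ
  lia

theorem eq_bot_or_eq_top_of_natAbs_totalSpin_eq {σ : V → Bool}
    (h : (totalSpin σ).natAbs = Fintype.card V) : σ = ⊥ ∨ σ = ⊤ := by
  have heq := totalSpin_eq_two_mul_card_sub σ
  have hcard : (Finset.univ.filter fun u => σ u).card = 0 ∨
      (Finset.univ.filter fun u => σ u).card = (Finset.univ : Finset V).card := by
    rw [Finset.card_univ]
    lia
  refine hcard.imp (fun h0 => ?_) fun h1 => ?_
  · ext u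
    simpa using Finset.filter_eq_empty_iff.1 (Finset.card_eq_zero.1 h0) (Finset.mem_univ u)
  · ext u
    simpa using Finset.card_filter_eq_iff.1 h1 u (Finset.mem_univ u)

variable [DecidableEq V]

/-- The partition function of the weight `w` in the imaginary external field `i x`. -/
noncomputable def fieldSum (w : (V → Bool) → ℂ) (x : ℂ) : ℂ :=
  ∑ σ, w σ * Complex.exp (Complex.I * x * totalSpin σ)

theorem fieldSum_zero (w : (V → Bool) → ℂ) : fieldSum w 0 = ∑ σ, w σ := by
  simp [fieldSum]

theorem fieldSum_eq_exp_mul_spinPoly (w : (V → Bool) → ℂ) (x : ℂ) :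
    fieldSum w x = Complex.exp (-(Complex.I * x * Fintype.card V))
      * spinPoly w (fun _ => Complex.exp (2 * Complex.I * x)) := by
  rw [fieldSum, spinPoly, Finset.mul_sum]
  refine Finset.sum_congr rfl fun σ _ => ?_
  rw [Finset.prod_ite, Finset.prod_const, Finset.prod_const_one, mul_one, ← Complex.exp_nat_mul,
    mul_left_comm, ← Complex.exp_add, totalSpin_eq_two_mul_card_sub]
  push_cast
  congr 2
  ring

variable {w : (V → Bool) → ℂ}

theorem fieldSum_neg (hw : ∀ σ, w σᶜ = w σ) (x : ℂ) : fieldSum w (-x) = fieldSum w x := by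
  rw [fieldSum, ← Equiv.sum_comp (compl_involutive (α := V → Bool)).toPerm]
  refine Finset.sum_congr rfl fun σ _ => ?_
  rw [Function.Involutive.coe_toPerm, hw, totalSpin_compl]
  simp

theorem fieldSum_eq_sum_cos (hw : ∀ σ, w σᶜ = w σ) (x : ℂ) :
    fieldSum w x = ∑ σ, w σ * Complex.cos ((totalSpin σ).natAbs * x) := by
  have hcos (σ : V → Bool) :
      Complex.cos ((totalSpin σ).natAbs * x) = Complex.cos (totalSpin σ * x) := by
    rcases Int.natAbs_eq (totalSpin σ) with h | h <;>
    · conv_rhs => rw [h]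
      simp
  calc
    fieldSum w x = (fieldSum w x + fieldSum w (-x)) / 2 := by rw [fieldSum_neg hw]; ring
    _ = ∑ σ, w σ * Complex.cos ((totalSpin σ).natAbs * x) := by
      rw [fieldSum, fieldSum, ← Finset.sum_add_distrib, Finset.sum_div]
      refine Finset.sum_congr rfl fun σ _ => ?_
      rw [hcos, Complex.cos, ← mul_add, mul_div_assoc]
      ring_nf

theorem LeeYang.im_eq_zero_of_fieldSum_eq_zero (hLY : LeeYang w) (hw : ∀ σ, w σᶜ = w σ) {x : ℂ}
    (hx : fieldSum w x = 0) : x.im = 0 := by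
  have im_nonpos : ∀ y : ℂ, fieldSum w y = 0 → y.im ≤ 0 := by
    intro y hy
    by_contra! hpos
    rw [fieldSum_eq_exp_mul_spinPoly] at hy
    refine hLY _ (fun _ => ?_) ((mul_eq_zero.1 hy).resolve_left (Complex.exp_ne_zero _))
    rw [Complex.norm_exp, Real.exp_lt_one_iff]
    simpa using hpos
  refine le_antisymm (im_nonpos x hx) ?_
  simpa using im_nonpos (-x) (by rwa [fieldSum_neg hw])

theorem LeeYang.apply_bot_ne_zero (hLY : LeeYang w) : w ⊥ ≠ 0 := by
  have hzero : spinPoly w 0 = w ⊥ := by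
    rw [spinPoly, Finset.sum_eq_single ⊥ (fun σ _ hσ => ?_) (by simp)]
    · simp
    · obtain ⟨u, hu⟩ : ∃ u, σ u = true := by
        by_contra! h
        exact hσ (funext fun u => by simpa using h u)
      rw [Finset.prod_eq_zero (Finset.mem_univ u) (by simp [hu]), mul_zero]
  exact hzero ▸ hLY 0 (by simp)

theorem LeeYang.sum_filter_natAbs_totalSpin_ne_zero (hLY : LeeYang w) (hw : ∀ σ, w σᶜ = w σ) :
    ∑ σ : V → Bool with (totalSpin σ).natAbs = Fintype.card V, w σ ≠ 0 := by
  have hconst : ∀ σ ∈ Finset.univ.filter fun σ : V → Bool =>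
      (totalSpin σ).natAbs = Fintype.card V, w σ = w ⊥ := by
    intro σ hσ
    rcases eq_bot_or_eq_top_of_natAbs_totalSpin_eq (Finset.mem_filter.1 hσ).2 with rfl | rfl
    · rfl
    · rw [← hw, compl_top]
  rw [Finset.sum_congr rfl hconst, Finset.sum_const, nsmul_eq_mul]
  refine mul_ne_zero (Nat.cast_ne_zero.2 (Finset.card_ne_zero_of_mem (a := ⊤) ?_))
    hLY.apply_bot_ne_zero
  exact Finset.mem_filter.2 ⟨Finset.mem_univ _, by simp [totalSpin]⟩

end Field

section Factorization

open Polynomial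

variable {V : Type*} [Fintype V] [DecidableEq V] {w : (V → Bool) → ℂ}

theorem LeeYang.exists_natDegree_eq_fieldSum (hLY : LeeYang w) (hw : ∀ σ, w σᶜ = w σ) :
    ∃ Q : ℂ[X], Q.natDegree = Fintype.card V / 2 ∧ ∀ x,
      fieldSum w x = Complex.cos x ^ (Fintype.card V % 2) * Q.eval (Complex.sin x ^ 2) := by
  choose P hdeg hP using exists_natDegree_eq_cos_nat_mul
  set n := Fintype.card V
  have hle (σ : V → Bool) : (P (totalSpin σ).natAbs).natDegree ≤ n / 2 :=
    (hdeg _).trans_le (Nat.div_le_div_right (natAbs_totalSpin_le σ))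
  refine ⟨∑ σ, C (w σ) * P (totalSpin σ).natAbs, ?_, fun x => ?_⟩
  · refine natDegree_eq_of_le_of_coeff_ne_zero (natDegree_sum_le_of_forall_le _ _ fun σ _ =>
      (natDegree_C_mul_le _ _).trans (hle σ)) ?_
    have hcoeff (σ : V → Bool) : (C (w σ) * P (totalSpin σ).natAbs).coeff (n / 2)
        = if (totalSpin σ).natAbs = n then w σ * (P n).leadingCoeff else 0 := by
      rw [coeff_C_mul]
      split_ifs with h
      · rw [h, leadingCoeff, hdeg]
      · rw [coeff_eq_zero_of_natDegree_lt, mul_zero]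
        have := natAbs_totalSpin_le σ
        have := natAbs_totalSpin_mod_two σ
        rw [hdeg]
        lia
    have hPn : P n ≠ 0 := by
      intro h
      have := hP n 0
      simp [h] at this
    rw [finsetSum_coeff, Finset.sum_congr rfl fun σ _ => hcoeff σ, ← Finset.sum_filter,
      ← Finset.sum_mul]
    exact mul_ne_zero (hLY.sum_filter_natAbs_totalSpin_ne_zero hw) (leadingCoeff_ne_zero.2 hPn)
  · rw [fieldSum_eq_sum_cos hw, eval_finsetSum, Finset.mul_sum]
    refine Finset.sum_congr rfl fun σ _ => ?_
    rw [hP, natAbs_totalSpin_mod_two, eval_mul, eval_C]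
    ring

theorem LeeYang.exists_eq_sin_sq_of_isRoot (hLY : LeeYang w) (hw : ∀ σ, w σᶜ = w σ)
    {Q : ℂ[X]} {m : ℕ} (hQ : ∀ x, fieldSum w x = Complex.cos x ^ m * Q.eval (Complex.sin x ^ 2))
    (h0 : Q.eval 0 ≠ 0) {r : ℂ} (hr : Q.IsRoot r) :
    ∃ y ∈ Set.Ioc 0 (π / 2), ((Real.sin y ^ 2 : ℝ) : ℂ) = r := by
  obtain ⟨q, rfl⟩ := IsAlgClosed.exists_pow_nat_eq r two_pos
  obtain ⟨x, rfl⟩ := Complex.sin_surjective q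
  have him : x.im = 0 := hLY.im_eq_zero_of_fieldSum_eq_zero hw (by rw [hQ, hr.eq_zero, mul_zero])
  obtain ⟨x, rfl⟩ : ∃ y : ℝ, (y : ℂ) = x := ⟨x.re, Complex.ext rfl (by simp [him])⟩
  have hsin : Real.sin x ≠ 0 := by
    intro hs
    rw [← Complex.ofReal_sin, hs, Complex.ofReal_zero, zero_pow two_ne_zero] at hr
    exact h0 hr
  refine ⟨Real.arcsin |Real.sin x|,
    ⟨Real.arcsin_pos.2 (abs_pos.2 hsin), Real.arcsin_le_pi_div_two _⟩, ?_⟩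
  rw [Real.sin_arcsin (by linarith [abs_nonneg (Real.sin x)]) (Real.abs_sin_le_one x), sq_abs]
  push_cast
  rfl

theorem LeeYang.exists_fieldSum_eq_prod (hLY : LeeYang w) (hw : ∀ σ, w σᶜ = w σ)
    (hsum : fieldSum w 0 ≠ 0) :
    ∃ x : ℕ → ℝ, (∀ k ∈ Finset.Icc 1 (Fintype.card V / 2), x k ∈ Set.Ioc 0 (π / 2)) ∧
      MonotoneOn x (Set.Icc 1 (Fintype.card V / 2)) ∧
      ∀ z, fieldSum w z = fieldSum w 0 * Complex.cos z ^ (Fintype.card V % 2) *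
        ∏ j ∈ Finset.Icc 1 (Fintype.card V / 2),
          (((Real.sin (x j) ^ 2 : ℝ) : ℂ) - Complex.sin z ^ 2) /
            ((Real.sin (x j) ^ 2 : ℝ) : ℂ) := by
  obtain ⟨Q, hdeg, hQ⟩ := hLY.exists_natDegree_eq_fieldSum hw
  have hQ0 : fieldSum w 0 = Q.eval 0 := by simp [hQ]
  have h0 : Q.eval 0 ≠ 0 := hQ0 ▸ hsum
  have hsplits : Q.Splits := IsAlgClosed.splits Q
  choose! g hg_mem hg_sin using
    fun r (hr : r ∈ Q.roots) => hLY.exists_eq_sin_sq_of_isRoot hw hQ h0 (isRoot_of_mem_roots hr)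
  obtain ⟨x, hmono, hmap⟩ := exists_monotoneOn_map_Icc_eq (Q.roots.map g)
  rw [Multiset.card_map, ← hsplits.natDegree_eq_card_roots, hdeg] at hmono hmap
  refine ⟨x, fun k hk => ?_, hmono, fun z => ?_⟩
  · obtain ⟨r, hr, hrk⟩ := Multiset.mem_map.1 (hmap ▸ Multiset.mem_map_of_mem x hk)
    exact hrk ▸ hg_mem r hr
  · have hroots : Q.roots =
        (Finset.Icc 1 (Fintype.card V / 2)).val.map fun j => ((Real.sin (x j) ^ 2 : ℝ) : ℂ) :=
      calc
        Q.roots = (Q.roots.map g).map fun y : ℝ => ((Real.sin y ^ 2 : ℝ) : ℂ) := by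
          rw [Multiset.map_map, Function.comp_def, Multiset.map_congr rfl hg_sin, Multiset.map_id']
        _ = _ := by rw [← hmap, Multiset.map_map, Function.comp_def]
    rw [hQ0, hQ, eval_eq_eval_zero_mul_prod_roots hsplits h0, hroots, Multiset.map_map,
      Finset.prod_eq_multiset_prod, mul_left_comm, mul_assoc]
    rfl

end Factorization

section Ising

variable {V : Type}

/-- The Boltzmann weight of the Ising model with couplings `J` on `E` and an extra coupling `t`
between `u₀` and `v₀`, in zero external field. -/
noncomputable def isingWeight (E : Finset (Sym2 V)) (J : Sym2 V → ℝ) (u₀ v₀ : V) (t : ℂ)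
    (σ : V → Bool) : ℂ :=
  Complex.exp (t * ((spin (σ u₀) * spin (σ v₀) : ℝ) : ℂ)
    + ((∑ e ∈ E, J e * pairProd σ e : ℝ) : ℂ))

theorem spin_not (b : Bool) : spin (!b) = -spin b := by
  cases b <;> simp [spin]

theorem pairProd_compl (σ : V → Bool) (e : Sym2 V) : pairProd σᶜ e = pairProd σ e := by
  induction e using Sym2.ind with
  | _ u v => simp [pairProd, spin_not]

theorem isingWeight_compl (E : Finset (Sym2 V)) (J : Sym2 V → ℝ) (u₀ v₀ : V) (t : ℂ)
    (σ : V → Bool) : isingWeight E J u₀ v₀ t σᶜ = isingWeight E J u₀ v₀ t σ := by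
  simp [isingWeight, pairProd_compl, spin_not]

theorem exp_mul_spin_mul_spin (j : ℝ) (a b : Bool) :
    Complex.exp (j * ((spin a * spin b : ℝ) : ℂ))
      = Complex.exp j * if a = b then 1 else (Real.exp (-2 * j) : ℂ) := by
  have hexp : Complex.exp (-j) = Complex.exp j * Complex.exp (-2 * j) := by
    rw [← Complex.exp_add]; ring_nf
  cases a <;> cases b <;> simp [spin, hexp]

variable [Fintype V]

theorem sum_spin (σ : V → Bool) : ∑ u, spin (σ u) = totalSpin σ := by
  rw [totalSpin, Int.cast_sum]
  refine Finset.sum_congr rfl fun u _ => ?_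
  cases h : σ u <;> simp [spin]

variable [DecidableEq V]

theorem LeeYang.mul_exp_spin_mul_spin {f : (V → Bool) → ℂ} (hf : LeeYang f) (u v : V) {j : ℝ}
    (hj : 0 ≤ j) :
    LeeYang fun σ => Complex.exp (j * ((spin (σ u) * spin (σ v) : ℝ) : ℂ)) * f σ := by
  have hl : |Real.exp (-2 * j)| ≤ 1 := by
    rw [Real.abs_exp, Real.exp_le_one_iff]
    linarith
  simp only [exp_mul_spin_mul_spin, mul_assoc]
  exact (hf.mul_ite_eq u v hl).const_mul (Complex.exp_ne_zero j)

theorem leeYang_isingWeight {E : Finset (Sym2 V)} {J : Sym2 V → ℝ} (hJ : ∀ e ∈ E, 0 ≤ J e)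
    (u₀ v₀ : V) {t : ℝ} (ht : 0 ≤ t) : LeeYang (isingWeight E J u₀ v₀ t) := by
  induction E using Finset.induction_on with
  | empty =>
    convert leeYang_one.mul_exp_spin_mul_spin u₀ v₀ ht using 2 with σ
    simp [isingWeight]
  | insert e E he ih =>
    rw [Finset.forall_mem_insert] at hJ
    induction e using Sym2.ind with
    | _ u v =>
      convert (ih hJ.2).mul_exp_spin_mul_spin u v hJ.1 using 2 with σ
      rw [isingWeight, isingWeight, ← Complex.exp_add, Finset.sum_insert he]
      simp only [pairProd, Sym2.lift_mk]
      push_cast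
      ring_nf

theorem isingZ_eq_fieldSum (E : Finset (Sym2 V)) (J : Sym2 V → ℝ) (u₀ v₀ : V) (t : ℂ) :
    IsingZ E J u₀ v₀ t = fieldSum (isingWeight E J u₀ v₀ t) := by
  ext x
  refine Finset.sum_congr rfl fun σ _ => ?_
  rw [sum_spin, Complex.exp_add, isingWeight, Complex.ofReal_intCast]

theorem isingZ_zero_ne_zero (E : Finset (Sym2 V)) (J : Sym2 V → ℝ) (u₀ v₀ : V) (t : ℝ) :
    IsingZ E J u₀ v₀ t 0 ≠ 0 := by
  rw [isingZ_eq_fieldSum, fieldSum_zero]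
  simp only [isingWeight]
  exact_mod_cast (Finset.sum_pos (fun σ _ => Real.exp_pos _) Finset.univ_nonempty).ne'

end Ising

theorem stmt3 {V : Type} [Fintype V] [DecidableEq V]
    (E : Finset (Sym2 V)) (J : Sym2 V → ℝ) (u₀ v₀ : V)
    (hE : s(u₀, v₀) ∈ E)
    (hferro : ∀ e ∈ E, 0 ≤ J e)
    (n : ℕ) (hn : n = Fintype.card V)
    (t : ℝ) (ht : 0 ≤ t) :
    (Even n → ∃ x : ℕ → ℝ,
      (∀ k ∈ Finset.Icc 1 (n / 2), 0 < x k ∧ x k ≤ π / 2) ∧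
      (∀ k, 1 ≤ k → k < n / 2 → x k ≤ x (k + 1)) ∧
      ∀ z : ℂ, IsingZ E J u₀ v₀ t z
        = IsingZ E J u₀ v₀ t 0 *
          ∏ j ∈ Finset.Icc 1 (n / 2),
            (((Real.sin (x j) ^ 2 : ℝ) : ℂ) - Complex.sin z ^ 2)
              / ((Real.sin (x j) ^ 2 : ℝ) : ℂ)) ∧
    (Odd n → ∃ x : ℕ → ℝ,
      (∀ k ∈ Finset.Icc 1 ((n - 1) / 2), 0 < x k ∧ x k ≤ π / 2) ∧
      (∀ k, 1 ≤ k → k < (n - 1) / 2 → x k ≤ x (k + 1)) ∧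
      ∀ z : ℂ, IsingZ E J u₀ v₀ t z
        = IsingZ E J u₀ v₀ t 0 * Complex.cos z *
          ∏ j ∈ Finset.Icc 1 ((n - 1) / 2),
            (((Real.sin (x j) ^ 2 : ℝ) : ℂ) - Complex.sin z ^ 2)
              / ((Real.sin (x j) ^ 2 : ℝ) : ℂ)) := by
  subst hn
  have hsum := isingZ_zero_ne_zero E J u₀ v₀ t
  rw [isingZ_eq_fieldSum] at hsum ⊢
  obtain ⟨x, hx, hmono, hprod⟩ := (leeYang_isingWeight hferro u₀ v₀ ht).exists_fieldSum_eq_prod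
    (isingWeight_compl E J u₀ v₀ t) hsum
  have hstep : ∀ k, 1 ≤ k → k < Fintype.card V / 2 → x k ≤ x (k + 1) := fun k hk hk' =>
    hmono ⟨hk, hk'.le⟩ ⟨k.succ_pos, hk'⟩ k.le_succ
  refine ⟨fun heven => ⟨x, hx, hstep, fun z => ?_⟩, fun hodd => ?_⟩
  · rw [hprod, Nat.even_iff.1 heven, pow_zero, mul_one]
  · have hhalf : (Fintype.card V - 1) / 2 = Fintype.card V / 2 := by
      have := Nat.odd_iff.1 hodd
      lia
    rw [hhalf]
    refine ⟨x, hx, hstep, fun z => ?_⟩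
    rw [hprod, Nat.odd_iff.1 hodd, pow_one]
end

section
/- Suppose that n is even, that J is ferromagnetic, and let 0 < t < s. Let 0 < x_1(0) ≤ … ≤ x_{n/2}(0) ≤ π/2 and 0 < x_1(s) ≤ … ≤ x_{n/2}(s) ≤ π/2 be real numbers such that Z_{G,0}(x) = Z_{G,0}(0)·∏_{j=1}^{n/2}(sin²x_j(0) − sin²x)/sin²x_j(0) and Z_{G,s}(x) = Z_{G,s}(0)·∏_{j=1}^{n/2}(sin²x_j(s) − sin²x)/sin²x_j(s) for all x ∈ ℂ. Set y_j(0) := sin²x_j(0), y_j(s) := sin²x_j(s), and K(t,s) := Z_{G,s}(0)·sinh(t)/(Z_{G,0}(0)·sinh(s−t)). Then K(t,s) > 0, and for every real x with Z_{G,t}(x) = 0, writing y := sin²x, one has ∏_{j=1}^{n/2}(y_j(0) − y)/y_j(0) = −K(t,s) · ∏_{j=1}^{n/2}(y_j(s) − y)/y_j(s). -/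
open scoped Real

/-!
A spin product `ε` takes only the values `±1`, so `exp (a * ε) = cosh a + ε * sinh a` and any three
such exponentials are linearly dependent, with coefficients independent of `ε`:
`sinh (s - r) * exp (t * ε) = sinh (s - t) * exp (r * ε) + sinh (t - r) * exp (s * ε)`.
Summing over configurations, `sinh (s - r) * Z_t = sinh (s - t) * Z_r + sinh (t - r) * Z_s`.
At a zero of `Z_t` the right-hand side vanishes, and dividing by the positive numbers `Z_r(0)` and
`sinh (s - t)` gives the relation between the normalized partition functions at `r` and `s`.
-/

lemma spin_sq (b : Bool) : spin b ^ 2 = 1 := by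
  cases b <;> norm_num [spin]

lemma cexp_mul_eq_cosh_add_mul_sinh {ε : ℂ} (hε : ε ^ 2 = 1) (a : ℂ) :
    Complex.exp (a * ε) = Complex.cosh a + ε * Complex.sinh a := by
  rcases sq_eq_one_iff.mp hε with rfl | rfl
  · rw [mul_one, one_mul, Complex.cosh_add_sinh]
  · rw [mul_neg_one, neg_one_mul, ← sub_eq_add_neg, Complex.cosh_sub_sinh]

lemma sinh_sub_mul_cexp_mul {ε : ℂ} (hε : ε ^ 2 = 1) (r t s : ℂ) :
    Complex.sinh (s - r) * Complex.exp (t * ε)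
      = Complex.sinh (s - t) * Complex.exp (r * ε)
        + Complex.sinh (t - r) * Complex.exp (s * ε) := by
  simp only [cexp_mul_eq_cosh_add_mul_sinh hε, Complex.sinh_sub]
  ring

section PartitionFunction

variable {V : Type} [Fintype V] [DecidableEq V]
  (E : Finset (Sym2 V)) (J : Sym2 V → ℝ) (u₀ v₀ : V)

theorem sinh_sub_mul_isingZ (r t s z : ℂ) :
    Complex.sinh (s - r) * IsingZ E J u₀ v₀ t z
      = Complex.sinh (s - t) * IsingZ E J u₀ v₀ r z
        + Complex.sinh (t - r) * IsingZ E J u₀ v₀ s z := by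
  simp only [IsingZ, Finset.mul_sum, ← Finset.sum_add_distrib]
  refine Finset.sum_congr rfl fun σ _ => ?_
  have hsign : ((spin (σ u₀) * spin (σ v₀) : ℝ) : ℂ) ^ 2 = 1 := by
    rw [← Complex.ofReal_pow, mul_pow, spin_sq, spin_sq, one_mul, Complex.ofReal_one]
  simp only [Complex.exp_add]
  linear_combination
    Complex.exp ((∑ e ∈ E, J e * pairProd σ e : ℝ) : ℂ)
      * Complex.exp (Complex.I * z * ((∑ u, spin (σ u) : ℝ) : ℂ))
      * sinh_sub_mul_cexp_mul hsign r t s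

/-- The zero-field partition function `Z_{G,t}(0)` as a real number, which makes its positivity
expressible; `IsingZ` itself is complex-valued. -/
noncomputable def zeroFieldZ (t : ℝ) : ℝ :=
  ∑ σ : V → Bool, Real.exp
    (t * (spin (σ u₀) * spin (σ v₀)) + ∑ e ∈ E, J e * pairProd σ e)

lemma zeroFieldZ_pos (t : ℝ) : 0 < zeroFieldZ E J u₀ v₀ t :=
  Finset.sum_pos (fun _ _ => Real.exp_pos _) Finset.univ_nonempty

lemma isingZ_zero_right (t : ℝ) : IsingZ E J u₀ v₀ t 0 = zeroFieldZ E J u₀ v₀ t := by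
  simp [IsingZ, zeroFieldZ]

/-- The constant `K` relating the normalized partition functions at the couplings `r` and `s` at
the zeros of the one at `t`. The paper's `K(t,s)` is the case `r = 0`. -/
noncomputable def couplingRatio (r t s : ℝ) : ℝ :=
  zeroFieldZ E J u₀ v₀ s * Real.sinh (t - r) / (zeroFieldZ E J u₀ v₀ r * Real.sinh (s - t))

lemma ofReal_couplingRatio (r t s : ℝ) :
    (couplingRatio E J u₀ v₀ r t s : ℂ)
      = IsingZ E J u₀ v₀ s 0 * (Real.sinh (t - r) : ℂ)
        / (IsingZ E J u₀ v₀ r 0 * (Real.sinh (s - t) : ℂ)) := by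
  rw [isingZ_zero_right, isingZ_zero_right, couplingRatio, Complex.ofReal_div,
    Complex.ofReal_mul, Complex.ofReal_mul]

variable {r t s : ℝ}

lemma couplingRatio_pos (hrt : r < t) (hts : t < s) : 0 < couplingRatio E J u₀ v₀ r t s :=
  div_pos
    (mul_pos (zeroFieldZ_pos E J u₀ v₀ s) (Real.sinh_pos_iff.mpr (sub_pos.mpr hrt)))
    (mul_pos (zeroFieldZ_pos E J u₀ v₀ r) (Real.sinh_pos_iff.mpr (sub_pos.mpr hts)))

lemma eq_neg_couplingRatio_mul_of_isingZ_eq_zero (hts : t ≠ s) {z a b : ℂ}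
    (hz : IsingZ E J u₀ v₀ t z = 0)
    (ha : IsingZ E J u₀ v₀ r z = IsingZ E J u₀ v₀ r 0 * a)
    (hb : IsingZ E J u₀ v₀ s z = IsingZ E J u₀ v₀ s 0 * b) :
    a = -couplingRatio E J u₀ v₀ r t s * b := by
  have hZ : IsingZ E J u₀ v₀ r 0 ≠ 0 := by
    rw [isingZ_zero_right]
    exact Complex.ofReal_ne_zero.mpr (zeroFieldZ_pos E J u₀ v₀ r).ne'
  have hsinh : (Real.sinh (s - t) : ℂ) ≠ 0 :=
    Complex.ofReal_ne_zero.mpr (Real.sinh_ne_zero.mpr (sub_ne_zero.mpr hts.symm))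
  have hinterp := sinh_sub_mul_isingZ E J u₀ v₀ r t s z
  rw [hz, ha, hb, mul_zero] at hinterp
  rw [ofReal_couplingRatio]
  field_simp
  push_cast
  linear_combination -hinterp

theorem stmt7_general (hrt : r < t) (hts : t < s) {p q : ℂ → ℂ}
    (hp : ∀ z, IsingZ E J u₀ v₀ r z = IsingZ E J u₀ v₀ r 0 * p z)
    (hq : ∀ z, IsingZ E J u₀ v₀ s z = IsingZ E J u₀ v₀ s 0 * q z) :
    ∃ K : ℝ, 0 < K ∧
      (K : ℂ) = IsingZ E J u₀ v₀ s 0 * (Real.sinh (t - r) : ℂ)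
        / (IsingZ E J u₀ v₀ r 0 * (Real.sinh (s - t) : ℂ)) ∧
      ∀ z : ℂ, IsingZ E J u₀ v₀ t z = 0 → p z = -K * q z :=
  ⟨couplingRatio E J u₀ v₀ r t s, couplingRatio_pos E J u₀ v₀ hrt hts,
    ofReal_couplingRatio E J u₀ v₀ r t s, fun z hz =>
      eq_neg_couplingRatio_mul_of_isingZ_eq_zero E J u₀ v₀ hts.ne hz (hp z) (hq z)⟩

end PartitionFunction

theorem stmt7 {V : Type} [Fintype V] [DecidableEq V]
    (E : Finset (Sym2 V)) (J : Sym2 V → ℝ) (u₀ v₀ : V)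
    (hE : s(u₀, v₀) ∈ E)
    (hferro : ∀ e ∈ E, 0 ≤ J e)
    (n : ℕ) (hn : n = Fintype.card V) (heven : Even n)
    (t s : ℝ) (ht : 0 < t) (hts : t < s)
    (x0 xs : ℕ → ℝ)
    (hx0range : ∀ k ∈ Finset.Icc 1 (n / 2), 0 < x0 k ∧ x0 k ≤ π / 2)
    (hx0mono : ∀ k, 1 ≤ k → k < n / 2 → x0 k ≤ x0 (k + 1))
    (hxsrange : ∀ k ∈ Finset.Icc 1 (n / 2), 0 < xs k ∧ xs k ≤ π / 2)
    (hxsmono : ∀ k, 1 ≤ k → k < n / 2 → xs k ≤ xs (k + 1))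
    (hfac0 : ∀ z : ℂ, IsingZ E J u₀ v₀ 0 z
      = IsingZ E J u₀ v₀ 0 0 *
        ∏ j ∈ Finset.Icc 1 (n / 2),
          (((Real.sin (x0 j) ^ 2 : ℝ) : ℂ) - Complex.sin z ^ 2)
            / ((Real.sin (x0 j) ^ 2 : ℝ) : ℂ))
    (hfacs : ∀ z : ℂ, IsingZ E J u₀ v₀ s z
      = IsingZ E J u₀ v₀ s 0 *
        ∏ j ∈ Finset.Icc 1 (n / 2),
          (((Real.sin (xs j) ^ 2 : ℝ) : ℂ) - Complex.sin z ^ 2)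
            / ((Real.sin (xs j) ^ 2 : ℝ) : ℂ)) :
    ∃ K : ℝ, 0 < K ∧
      (K : ℂ) = IsingZ E J u₀ v₀ s 0 * ((Real.sinh t : ℝ) : ℂ)
        / (IsingZ E J u₀ v₀ 0 0 * ((Real.sinh (s - t) : ℝ) : ℂ)) ∧
      ∀ x : ℝ, IsingZ E J u₀ v₀ t x = 0 →
        ∏ j ∈ Finset.Icc 1 (n / 2),
            (Real.sin (x0 j) ^ 2 - Real.sin x ^ 2) / Real.sin (x0 j) ^ 2
          = -K * ∏ j ∈ Finset.Icc 1 (n / 2),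
              (Real.sin (xs j) ^ 2 - Real.sin x ^ 2) / Real.sin (xs j) ^ 2 := by
  obtain ⟨K, hKpos, hK, hzeros⟩ := stmt7_general E J u₀ v₀ ht hts (by exact_mod_cast hfac0) hfacs
  exact ⟨K, hKpos, by simpa using hK, fun x hx => by exact_mod_cast hzeros x hx⟩
end
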